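/- Let f : S^{n−1} → (0,∞) and φ : (0,∞) → (0,∞) be smooth, and let Ω_t, t ∈ [0,T), be a smooth, origin-symmetric, strictly convex solution of the flow. Then the quantity ∫_{S^{n−1}} log ρ(u,t) du is constant in t, i.e. ∫_{S^{n−1}} log ρ(u,t) du = ∫_{S^{n−1}} log ρ(u,0) du for every t ∈ [0,T), where ρ(·,t) is the radial function of Ω_t. -/

import Mathlib

noncomputable section

open Metric MeasureTheory Set Filter Topology
open scoped RealInnerProductSpace NNReal

/-- Abbreviation for `n`-dimensional Euclidean space. -/
abbrev Euc (n : ℕ) : Type := EuclideanSpace ℝ (Fin n)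

/-- The unit sphere `S^{n-1}` in `ℝⁿ`, as a set. -/
abbrev USphere (n : ℕ) : Set (Euc n) := Metric.sphere (0 : Euc n) 1

/-- The surface (spherical Lebesgue) measure on the unit sphere. -/
def sphMeasure (n : ℕ) : Measure (USphere n) :=
  (volume : Measure (Euc n)).toSphere

/-- Total surface measure `|S^{n-1}|` of the unit sphere. -/
def sphArea (n : ℕ) : ℝ := (sphMeasure n Set.univ).toReal

/-- Integral over the unit sphere with respect to the spherical Lebesgue measure. -/
def sphInt (n : ℕ) (g : Euc n → ℝ) : ℝ :=
  ∫ x : USphere n, g x ∂(sphMeasure n)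

/-- The covariant (spherical) gradient on `S^{n-1}` of the restriction of `F`,
i.e. the tangential component of the Euclidean gradient of `F`. -/
def sphGrad (n : ℕ) (F : Euc n → ℝ) (x : Euc n) : Euc n :=
  gradient F x - ⟪gradient F x, x⟫ • x

/-- `√(|∇h|² + h²)` for the (1-homogeneous extension of the) function `F` at `x`. -/
def radTerm (n : ℕ) (F : Euc n → ℝ) (x : Euc n) : ℝ :=
  Real.sqrt (‖sphGrad n F x‖ ^ 2 + F x ^ 2)

/-- The Euclidean Hessian operator of `F` at `x`. For a positively 1-homogeneous `F`
this operator kills `x` and restricts on `x^⊥` to the matrix `∇²h + hI` of the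
spherical Hessian. -/
def hessOp (n : ℕ) (F : Euc n → ℝ) (x : Euc n) : Euc n →L[ℝ] Euc n :=
  fderiv ℝ (gradient F) x

/-- `det(∇²h + hI)` at `x ∈ S^{n-1}`: the determinant of the restriction of the Euclidean
Hessian of the 1-homogeneous extension to `x^⊥`, computed as the determinant of
`Hess F + x ⊗ x` on all of `ℝⁿ` (the Hessian of a 1-homogeneous function kills `x`). -/
def sphDet (n : ℕ) (F : Euc n → ℝ) (x : Euc n) : ℝ :=
  LinearMap.det
    ((hessOp n F x + (innerSL ℝ x).smulRight x : Euc n →L[ℝ] Euc n) : Euc n →ₗ[ℝ] Euc n)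

/-- `F` is the (1-homogeneously extended) support function of a smooth strictly convex
body with the origin in its interior: it is smooth away from the origin, positively
1-homogeneous, positive, and `∇²h + hI` is positive definite on each tangent space. -/
structure IsSupportFn (n : ℕ) (F : Euc n → ℝ) : Prop where
  smooth : ContDiffOn ℝ (⊤ : ℕ∞) F {(0 : Euc n)}ᶜ
  homog : ∀ c : ℝ, 0 < c → ∀ x : Euc n, F (c • x) = c * F x
  pos : ∀ x ∈ USphere n, 0 < F x
  posdef : ∀ x ∈ USphere n, ∀ v : Euc n, v ≠ 0 → ⟪x, v⟫ = 0 →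
    0 < ⟪v, hessOp n F x v⟫

/-- The convex body determined by the support function `F`. -/
def bodyOf (n : ℕ) (F : Euc n → ℝ) : Set (Euc n) :=
  {y | ∀ x ∈ USphere n, ⟪x, y⟫ ≤ F x}

/-- The radial function of the convex body with support function `F`. -/
def radialFn (n : ℕ) (F : Euc n → ℝ) (u : Euc n) : ℝ :=
  sSup {r : ℝ | 0 < r ∧ r • u ∈ bodyOf n F}

/-- The normalization factor `η` of the flow. -/
def flowEta (n : ℕ) (f : Euc n → ℝ) (φ : ℝ → ℝ) (h : Euc n → ℝ) : ℝ :=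
  sphArea n / sphInt n (fun x => f x / φ (1 / h x))

/-- `H : ℝ → Euc n → ℝ` is (the family of support functions of) a smooth, origin-symmetric,
strictly convex solution of the flow on the time interval `J`. -/
structure IsFlowSol (n : ℕ) (f : Euc n → ℝ) (φ : ℝ → ℝ) (J : Set ℝ)
    (H : ℝ → Euc n → ℝ) : Prop where
  smooth : ContDiffOn ℝ (⊤ : ℕ∞) (fun p : ℝ × Euc n => H p.1 p.2) (J ×ˢ {(0 : Euc n)}ᶜ)
  body : ∀ t ∈ J, IsSupportFn n (H t)
  symm : ∀ t ∈ J, ∀ x : Euc n, H t (-x) = H t x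
  eqn : ∀ t ∈ J, ∀ x ∈ USphere n,
    HasDerivWithinAt (fun s => H s x)
      (H t x - flowEta n f φ (H t) * f x * radTerm n (H t) x ^ n /
        (φ (1 / H t x) * sphDet n (H t) x)) J t

/-- Condition (i) of the Orlicz-Aleksandrov flow theorem. -/
def CondI (n : ℕ) (f : Euc n → ℝ) (φ : ℝ → ℝ) (h₀ : Euc n → ℝ) : Prop :=
  ∃ R : ℝ → ℝ, (∀ s ∈ Ioi (0 : ℝ), 0 < R s) ∧ StrictMonoOn R (Ioi 0) ∧
    Tendsto R (𝓝[>] (0 : ℝ)) (𝓝 0) ∧ Tendsto R atTop atTop ∧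
    (∀ s ∈ Ioi (0 : ℝ), IntegrableOn (fun t => 1 / (t * φ t)) (Ioo 0 s) ∧
      R s = ∫ t in Ioo (0 : ℝ) s, 1 / (t * φ t)) ∧
    (∀ s ∈ Ioi (0 : ℝ), HasDerivAt R (1 / (s * φ s)) s ∧ 1 / (s * φ s) ≠ 0) ∧
    ∃ Chat : ℝ, 0 < Chat ∧
      (∀ θ ∈ USphere n,
        sphInt n (fun x => f x * R (1 / |⟪x, θ⟫|)) ≤ Chat) ∧
      Chat < sphInt n (fun x => f x * R (1 / h₀ x))

/-- Condition (ii) of the Orlicz-Aleksandrov flow theorem. -/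
def CondII (φ : ℝ → ℝ) : Prop :=
  ∃ R : ℝ → ℝ, (∀ s ∈ Ioi (0 : ℝ), 0 < R s) ∧ StrictAntiOn R (Ioi 0) ∧
    Tendsto R (𝓝[>] (0 : ℝ)) atTop ∧ Tendsto R atTop (𝓝 0) ∧
    (∀ s ∈ Ioi (0 : ℝ), IntegrableOn (fun t => 1 / (t * φ t)) (Ioi s) ∧
      R s = ∫ t in Ioi s, 1 / (t * φ t)) ∧
    (∀ s ∈ Ioi (0 : ℝ), HasDerivAt R (-(1 / (s * φ s))) s ∧ 1 / (s * φ s) ≠ 0)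

/-! Write `h` for the support function of the body and `p = ∇F x` for the gradient of its
`1`-homogeneous extension, which is the boundary point with outer normal `x`. Then `⟪p, x⟫ = h` and
`|p|² = |∇h|² + h²`, so `|p|` is the value of `ρ` in the direction `p / |p|` (`gdir`).

*Change of variables.* The map `x ↦ p / |p|` of the sphere is a bijection with Jacobian
`h det(∇²h + hI) / |p|ⁿ`. To avoid differential geometry on the sphere, it is extended to the
norm-preserving map `radMap F x = |x| p / |p|` of `ℝⁿ ∖ {0}`; its derivative has an explicit
determinant (`radJac_eq`), it is bijective by strict convexity and a maximum argument
(`radMap_injOn`, `radMap_image`), and integrating over the unit ball in polar coordinates turns the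
change of variables formula in `ℝⁿ` into one on the sphere (`sphInt_comp_gdir`).

*Envelope.* The radial function satisfies `ρ(u) ≤ h(x) / ⟪x, u⟫` whenever `⟪x, u⟫ > 0`, with equality
when `u = p / |p|`. Take `u` and `x` related in this way at time `t`. For every other time `s` it
follows that `log ρ(u, s) - log ρ(u, t) ≤ log h(x, s) - log h(x, t)`. Integrating over `u` and
changing variables, `G(t) = ∫ log ρ(u, t) du` satisfies
`G(s) - G(t) ≤ A(s) := ∫ J_t (log h(x, s) - log h(x, t)) dx`, where `J_t` is the Jacobian at time `t`
(`integral_sub_le`). Thus no differentiability of `ρ` in time is needed.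

*Conclusion.* By the flow equation, `J_t ∂_t h / h = J_t - η f / φ(1/h)`: the factors `|p|ⁿ`,
`det(∇²h + hI)` and `h` cancel. Since `∫ J_t = |S^{n-1}|` and `η` is the quotient of `|S^{n-1}|` by
`∫ f / φ(1/h)`, the barrier `A` has derivative `0` at `t` (`hasDerivAt_barrier`). A continuous
function having at each point a differentiable upper barrier with derivative `0` is constant
(`const_of_upper_barrier`).
-/

/-! ### Homogeneous support functions -/

namespace IsSupportFn

variable {n : ℕ} {F : Euc n → ℝ}

lemma contDiffAt (hF : IsSupportFn n F) {x : Euc n} (hx : x ≠ 0) :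
    ContDiffAt ℝ (⊤ : ℕ∞) F x :=
  hF.smooth.contDiffAt (isOpen_compl_singleton.mem_nhds hx)

lemma hasFDerivAt (hF : IsSupportFn n F) {x : Euc n} (hx : x ≠ 0) :
    HasFDerivAt F (innerSL ℝ (gradient F x)) x :=
  ((hF.contDiffAt hx).differentiableAt (by simp)).hasGradientAt.hasFDerivAt

lemma contDiffOn_gradient (hF : IsSupportFn n F) :
    ContDiffOn ℝ (⊤ : ℕ∞) (gradient F) {(0 : Euc n)}ᶜ := by
  have h : ContDiffOn ℝ (⊤ : ℕ∞) (fderiv ℝ F) {(0 : Euc n)}ᶜ :=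
    hF.smooth.fderiv_of_isOpen isOpen_compl_singleton (by simp)
  exact (InnerProductSpace.toDual ℝ (Euc n)).symm.contDiff.comp_contDiffOn h

lemma hasFDerivAt_gradient (hF : IsSupportFn n F) {x : Euc n} (hx : x ≠ 0) :
    HasFDerivAt (gradient F) (hessOp n F x) x :=
  ((hF.contDiffOn_gradient.contDiffAt (isOpen_compl_singleton.mem_nhds hx)).differentiableAt
    (by simp)).hasFDerivAt

lemma gradient_smul (hF : IsSupportFn n F) {c : ℝ} (hc : 0 < c) (x : Euc n) :
    gradient F (c • x) = gradient F x := by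
  have h1 : (fun y => F (c • y)) = fun y => c • F y := by
    ext y; exact hF.homog c hc y
  have h2 : fderiv ℝ (fun y => F (c • y)) x = c • fderiv ℝ F (c • x) := fderiv_comp_smul ..
  have h3 : fderiv ℝ (fun y => c • F y) x = c • fderiv ℝ F x := 
    congrFun (fderiv_const_smul_field (𝕜 := ℝ) (f := F) c) x
  rw [h1, h3] at h2
  have := smul_right_injective _ hc.ne' h2
  simp only [gradient, this]

lemma hessOp_smul (hF : IsSupportFn n F) {c : ℝ} (hc : 0 < c) (x : Euc n) :
    c • hessOp n F (c • x) = hessOp n F x := by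
  have h1 : (fun y => gradient F (c • y)) = gradient F := by
    ext1 y; exact hF.gradient_smul hc y
  have h2 : fderiv ℝ (fun y => gradient F (c • y)) x = c • fderiv ℝ (gradient F) (c • x) :=
    fderiv_comp_smul ..
  rw [h1] at h2
  exact h2.symm

lemma hasDerivAt_smul (x : Euc n) : HasDerivAt (fun c : ℝ => c • x) x 1 := by
  simpa using (hasDerivAt_id (1 : ℝ)).smul_const x

/-- Euler's relation for the `1`-homogeneous function `F`. -/
lemma inner_gradient_self (hF : IsSupportFn n F) {x : Euc n} (hx : x ≠ 0) :
    ⟪gradient F x, x⟫ = F x := by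
  have h1 : HasDerivAt (fun c : ℝ => F (c • x)) ⟪gradient F x, x⟫ 1 := by
    have := hF.hasFDerivAt (x := (1 : ℝ) • x) (by simpa using hx)
    simpa [Function.comp_def] using this.comp_hasDerivAt (1 : ℝ) (hasDerivAt_smul x)
  have h2 : HasDerivAt (fun c : ℝ => F (c • x)) (F x) 1 := by
    have : HasDerivAt (fun c : ℝ => c * F x) (F x) 1 := by
      simpa using (hasDerivAt_id (1 : ℝ)).mul_const (F x)
    refine this.congr_of_eventuallyEq ?_
    filter_upwards [lt_mem_nhds one_pos] with c hc using hF.homog c hc x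
  exact h1.unique h2

lemma hessOp_self (hF : IsSupportFn n F) {x : Euc n} (hx : x ≠ 0) : hessOp n F x x = 0 := by
  have h1 : HasDerivAt (fun c : ℝ => gradient F (c • x)) (hessOp n F x x) 1 := by
    have := hF.hasFDerivAt_gradient (x := (1 : ℝ) • x) (by simpa using hx)
    simpa [Function.comp_def] using this.comp_hasDerivAt (1 : ℝ) (hasDerivAt_smul x)
  have h2 : HasDerivAt (fun c : ℝ => gradient F (c • x)) 0 1 := by
    refine (hasDerivAt_const (1 : ℝ) (gradient F x)).congr_of_eventuallyEq ?_
    filter_upwards [lt_mem_nhds one_pos] with c hc using hF.gradient_smul hc x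
  exact h1.unique h2

/-- The Hessian takes values in `x^⊥`: differentiate Euler's relation. -/
lemma inner_hessOp_self (hF : IsSupportFn n F) {x : Euc n} (hx : x ≠ 0) (v : Euc n) :
    ⟪hessOp n F x v, x⟫ = 0 := by
  have h1 := (hF.hasFDerivAt_gradient hx).inner ℝ (hasFDerivAt_id x)
  have h2 : HasFDerivAt (fun y => ⟪gradient F y, id y⟫) (innerSL ℝ (gradient F x)) x := by
    refine (hF.hasFDerivAt hx).congr_of_eventuallyEq ?_
    filter_upwards [isOpen_compl_singleton.mem_nhds hx] with y hy
      using hF.inner_gradient_self hy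
  have := congrArg (fun L : Euc n →L[ℝ] ℝ => L v) (h1.unique h2)
  simpa using this

lemma inner_hessOp_pos (hF : IsSupportFn n F) {x v : Euc n} (hx : x ≠ 0)
    (hv : ∀ c : ℝ, v ≠ c • x) : 0 < ⟪v, hessOp n F x v⟫ := by
  have hn : 0 < ‖x‖ := norm_pos_iff.2 hx
  -- the component of `v` orthogonal to `x`
  set a : ℝ := ⟪x, v⟫ / ‖x‖ ^ 2
  set w : Euc n := v - a • x with hw
  have hxw : ⟪x, w⟫ = 0 := by
    simp only [hw, inner_sub_right, inner_smul_right, real_inner_self_eq_norm_sq, a]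
    field_simp; ring
  have hw0 : w ≠ 0 := sub_ne_zero.2 (hv a)
  have hmem : ‖x‖⁻¹ • x ∈ USphere n := by simp [norm_smul, hn.ne']
  have h := hF.posdef _ hmem w hw0 (by rw [inner_smul_left, hxw, mul_zero])
  have h2 : hessOp n F x w = ‖x‖⁻¹ • hessOp n F (‖x‖⁻¹ • x) w := by
    rw [← hF.hessOp_smul (inv_pos.2 hn) x]; simp
  have h3 : hessOp n F x v = hessOp n F x w := by
    simp [hw, hF.hessOp_self hx]
  have h4 : ⟪v, hessOp n F x v⟫ = ‖x‖⁻¹ * ⟪w, hessOp n F (‖x‖⁻¹ • x) w⟫ := by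
    rw [h3, show v = w + a • x by simp [hw], inner_add_left, inner_smul_left,
      real_inner_comm, real_inner_comm _ x, hF.inner_hessOp_self hx, h2, inner_smul_left]
    simp [real_inner_comm]
  rw [h4]; positivity

lemma pos_of_ne_zero (hF : IsSupportFn n F) {x : Euc n} (hx : x ≠ 0) : 0 < F x := by
  have hn : 0 < ‖x‖ := norm_pos_iff.2 hx
  have h := hF.pos (‖x‖⁻¹ • x) (by simp [norm_smul, hn.ne'])
  rw [hF.homog _ (inv_pos.2 hn)] at h
  exact (pos_iff_pos_of_mul_pos h).1 (inv_pos.2 hn)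

lemma gradient_ne_zero (hF : IsSupportFn n F) {x : Euc n} (hx : x ≠ 0) : gradient F x ≠ 0 := by
  intro h
  have := hF.inner_gradient_self hx
  rw [h, inner_zero_left] at this
  exact (hF.pos_of_ne_zero hx).ne this

/-- Strict convexity: the boundary point `∇F x` lies strictly inside the supporting half-space
with normal direction `y`, unless `y` and `x` have the same direction. If `x` and `y` are linearly
independent, `F` is strictly convex along the segment from `x` to `y`. -/
lemma inner_gradient_lt (hF : IsSupportFn n F) {x y : Euc n} (hx : x ≠ 0) (hy : y ≠ 0)
    (hxy : ∀ c : ℝ, 0 < c → y ≠ c • x) : ⟪gradient F x, y⟫ < F y := by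
  by_cases hpar : ∃ c : ℝ, y = c • x
  · obtain ⟨c, rfl⟩ := hpar
    have hc : c ≤ 0 := not_lt.1 fun h => hxy c h rfl
    rw [inner_smul_right, hF.inner_gradient_self hx]
    exact (mul_nonpos_of_nonpos_of_nonneg hc (hF.pos_of_ne_zero hx).le).trans_lt
      (hF.pos_of_ne_zero hy)
  push Not at hpar
  set v := y - x with hv
  have key : ∀ s c : ℝ, v ≠ c • (x + s • v) := by
    intro s c h
    have h1 : (1 - c * s) • y = (1 - c * s + c) • x := by
      have h' : v - c • (x + s • v) = 0 := sub_eq_zero.2 h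
      rw [← sub_eq_zero, ← h', hv]; module
    by_cases h0 : 1 - c * s = 0
    · rw [h0, zero_smul, zero_add] at h1
      rcases smul_eq_zero.1 h1.symm with h2 | h2
      · rw [h2] at h0; norm_num at h0
      · exact hx h2
    · apply hpar ((1 - c * s)⁻¹ * (1 - c * s + c))
      rw [mul_smul, ← h1, smul_smul, inv_mul_cancel₀ h0, one_smul]
  have hne : ∀ s : ℝ, x + s • v ≠ 0 := by
    intro s h
    by_cases hs : s = 0
    · simp [hs] at h; exact hx h
    · apply hpar ((s - 1) / s)
      have : s • y = (s - 1) • x := by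
        rw [← sub_eq_zero, ← h, hv]; module
      rw [div_eq_inv_mul, mul_smul, ← this, smul_smul, inv_mul_cancel₀ hs, one_smul]
  have hγ : ∀ s : ℝ, HasDerivAt (fun s : ℝ => x + s • v) v s := by
    intro s
    simpa using ((hasDerivAt_id s).smul_const v).const_add x
  have hg : ∀ s : ℝ, HasDerivAt (fun s : ℝ => F (x + s • v)) ⟪gradient F (x + s • v), v⟫ s := by
    intro s
    simpa [Function.comp_def] using (hF.hasFDerivAt (hne s)).comp_hasDerivAt s (hγ s)
  have hg' : ∀ s : ℝ, HasDerivAt (fun s : ℝ => ⟪gradient F (x + s • v), v⟫)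
      ⟪hessOp n F (x + s • v) v, v⟫ s := by
    intro s
    have := ((hF.hasFDerivAt_gradient (hne s)).comp_hasDerivAt s (hγ s)).inner ℝ
      (hasDerivAt_const s v)
    simpa using this
  have hmono : StrictMono fun s : ℝ => ⟪gradient F (x + s • v), v⟫ := by
    apply strictMono_of_deriv_pos
    intro s
    rw [(hg' s).deriv, real_inner_comm]
    exact hF.inner_hessOp_pos (hne s) (key s)
  obtain ⟨s, hs, hs'⟩ := exists_hasDerivAt_eq_slope (fun s : ℝ => F (x + s • v)) _ zero_lt_one
    (fun s _ => (hg s).continuousAt.continuousWithinAt) (fun s _ => hg s)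
  have h0 := hmono hs.1
  simp only [hs', zero_smul, add_zero, one_smul, sub_zero, div_one] at h0
  rw [hv, inner_sub_right, hF.inner_gradient_self hx] at h0
  simpa using h0

lemma inner_gradient_le (hF : IsSupportFn n F) {x y : Euc n} (hx : x ≠ 0) (hy : y ≠ 0) :
    ⟪gradient F x, y⟫ ≤ F y := by
  by_cases h : ∃ c : ℝ, 0 < c ∧ y = c • x
  · obtain ⟨c, hc, rfl⟩ := h
    rw [inner_smul_right, hF.inner_gradient_self hx, hF.homog c hc]
  · push Not at h
    exact (hF.inner_gradient_lt hx hy h).le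

end IsSupportFn

/-! ### The map from normals to radial directions -/

lemma hasFDerivAt_norm_euc {n : ℕ} {x : Euc n} (hx : x ≠ 0) :
    HasFDerivAt (fun y : Euc n => ‖y‖) (‖x‖⁻¹ • innerSL ℝ x) x := by
  have hn : ‖x‖ ^ 2 ≠ 0 := by simpa using hx
  have h := (hasStrictFDerivAt_norm_sq x).hasFDerivAt.sqrt hn
  simp only [Real.sqrt_sq (norm_nonneg _)] at h
  refine h.congr_fderiv ?_
  ext v
  simp
  field_simp

/-- An operator with positive definite quadratic form, not necessarily symmetric, has positive
determinant. -/
lemma det_pos_of_inner_pos {n : ℕ} (L : Euc n →L[ℝ] Euc n)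
    (hL : ∀ v : Euc n, v ≠ 0 → 0 < ⟪v, L v⟫) : 0 < L.det := by
  -- deform `L` linearly to the identity through operators with positive quadratic form
  let g : ℝ → ℝ := fun s => ((1 - s) • ContinuousLinearMap.id ℝ (Euc n) + s • L).det
  have hg : Continuous g := ContinuousLinearMap.continuous_det.comp (by fun_prop)
  have hg0 : g 0 = 1 := by
    have : (1 - (0 : ℝ)) • ContinuousLinearMap.id ℝ (Euc n) + (0 : ℝ) • L
        = ContinuousLinearMap.id ℝ (Euc n) := by ext1 v; simp
    simp only [g, this]
    exact LinearMap.det_id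
  have hg1 : g 1 = L.det := by
    have : (1 - (1 : ℝ)) • ContinuousLinearMap.id ℝ (Euc n) + (1 : ℝ) • L = L := by
      ext1 v; simp
    simp only [g, this]
  have hne : ∀ s ∈ Icc (0 : ℝ) 1, g s ≠ 0 := by
    intro s hs h0
    obtain ⟨v, hv, hv0⟩ := (Submodule.ne_bot_iff _).1
      (LinearMap.bot_lt_ker_of_det_eq_zero h0).ne'
    have h1 : (1 - s) • v + s • L v = 0 := by simpa using hv
    have h2 : (1 - s) * ⟪v, v⟫ + s * ⟪v, L v⟫ = 0 := by
      have := congrArg (fun z => ⟪v, z⟫) h1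
      simpa only [inner_add_right, inner_smul_right, inner_zero_right] using this
    have h3 : 0 < ⟪v, v⟫ := real_inner_self_pos.2 hv0
    have h4 := hL v hv0
    rcases hs.1.eq_or_lt with rfl | h
    · simp at h2; exact hv0 h2
    · nlinarith [mul_pos h h4, mul_nonneg (sub_nonneg.2 hs.2) h3.le]
  by_contra hneg
  obtain ⟨s, hs, hs0⟩ := intermediate_value_Icc' zero_le_one hg.continuousOn
    (show (0 : ℝ) ∈ Icc (g 1) (g 0) from ⟨hg1 ▸ not_lt.1 hneg, by simp [hg0]⟩)
  exact hne s hs hs0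

/-- The direction `∇F x / |∇F x|` of the boundary point with outer normal `x`. -/
def gdir {n : ℕ} (F : Euc n → ℝ) (x : Euc n) : Euc n :=
  ‖gradient F x‖⁻¹ • gradient F x

/-- The `1`-homogeneous, norm-preserving extension to `ℝⁿ ∖ {0}` of the map of the sphere sending
a normal direction to the direction of the corresponding boundary point. -/
def radMap {n : ℕ} (F : Euc n → ℝ) (x : Euc n) : Euc n :=
  ‖x‖ • gdir F x

/-- The Jacobian of `radMap F`. -/
def radJac {n : ℕ} (F : Euc n → ℝ) (x : Euc n) : ℝ :=
  |(fderiv ℝ (radMap F) x).det|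

namespace IsSupportFn

variable {n : ℕ} {F : Euc n → ℝ}

lemma norm_gdir (hF : IsSupportFn n F) {x : Euc n} (hx : x ≠ 0) : ‖gdir F x‖ = 1 := by
  have := norm_ne_zero_iff.2 (hF.gradient_ne_zero hx)
  simp [gdir, norm_smul, this]

lemma gdir_smul (hF : IsSupportFn n F) {c : ℝ} (hc : 0 < c) (x : Euc n) :
    gdir F (c • x) = gdir F x := by
  simp [gdir, hF.gradient_smul hc]

lemma norm_radMap (hF : IsSupportFn n F) {x : Euc n} (hx : x ≠ 0) : ‖radMap F x‖ = ‖x‖ := by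
  simp [radMap, norm_smul, hF.norm_gdir hx]

lemma radMap_smul (hF : IsSupportFn n F) {c : ℝ} (hc : 0 < c) (x : Euc n) :
    radMap F (c • x) = c • radMap F x := by
  simp [radMap, hF.gdir_smul hc, norm_smul, abs_of_pos hc, mul_smul]

lemma contDiffOn_gdir (hF : IsSupportFn n F) :
    ContDiffOn ℝ (⊤ : ℕ∞) (gdir F) {(0 : Euc n)}ᶜ :=
  ((hF.contDiffOn_gradient.norm ℝ fun _ hx => hF.gradient_ne_zero hx).inv
    fun _ hx => norm_ne_zero_iff.2 (hF.gradient_ne_zero hx)).smul hF.contDiffOn_gradient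

lemma contDiffOn_radMap (hF : IsSupportFn n F) :
    ContDiffOn ℝ (⊤ : ℕ∞) (radMap F) {(0 : Euc n)}ᶜ :=
  (contDiffOn_id.norm ℝ fun _ hx => hx).smul hF.contDiffOn_gdir

lemma radMap_differentiableAt (hF : IsSupportFn n F) {x : Euc n} (hx : x ≠ 0) :
    DifferentiableAt ℝ (radMap F) x :=
  (hF.contDiffOn_radMap.contDiffAt (isOpen_compl_singleton.mem_nhds hx)).differentiableAt
    (by simp)

lemma continuousOn_radJac (hF : IsSupportFn n F) : ContinuousOn (radJac F) {(0 : Euc n)}ᶜ := by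
  have h : ContDiffOn ℝ (⊤ : ℕ∞) (fderiv ℝ (radMap F)) {(0 : Euc n)}ᶜ :=
    hF.contDiffOn_radMap.fderiv_of_isOpen isOpen_compl_singleton (by simp)
  exact (ContinuousLinearMap.continuous_det.comp_continuousOn h.continuousOn).abs

lemma radJac_smul (hF : IsSupportFn n F) {c : ℝ} (hc : 0 < c) (x : Euc n) :
    radJac F (c • x) = radJac F x := by
  have h1 : (fun y => radMap F (c • y)) = fun y => c • radMap F y := by
    ext1 y; exact hF.radMap_smul hc y
  have h2 : fderiv ℝ (fun y => radMap F (c • y)) x = c • fderiv ℝ (radMap F) (c • x) :=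
    fderiv_comp_smul ..
  have h3 : fderiv ℝ (fun y => c • radMap F y) x = c • fderiv ℝ (radMap F) x :=
    congrFun (fderiv_const_smul_field (𝕜 := ℝ) (f := radMap F) c) x
  rw [h1, h3] at h2
  have : fderiv ℝ (radMap F) x = fderiv ℝ (radMap F) (c • x) :=
    smul_right_injective (Euc n →L[ℝ] Euc n) hc.ne' h2
  simp only [radJac, this]

lemma sphDet_pos (hF : IsSupportFn n F) {x : Euc n} (hx : x ∈ USphere n) :
    0 < sphDet n F x := by
  have hx1 : ‖x‖ = 1 := by simpa using hx
  have hx0 : x ≠ 0 := by rintro rfl; simp at hx1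
  refine det_pos_of_inner_pos (hessOp n F x + (innerSL ℝ x).smulRight x) fun v hv => ?_
  have h : ⟪v, (hessOp n F x + (innerSL ℝ x).smulRight x) v⟫
      = ⟪v, hessOp n F x v⟫ + ⟪x, v⟫ ^ 2 := by
    simp [inner_add_right, inner_smul_right, real_inner_comm, sq]
  rw [h]
  by_cases hp : ∃ c : ℝ, v = c • x
  · obtain ⟨c, rfl⟩ := hp
    have hc : c ≠ 0 := by rintro rfl; simp at hv
    simp [hF.hessOp_self hx0, inner_smul_right, hx1]
    positivity
  · push Not at hp
    have := hF.inner_hessOp_pos hx0 hp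
    positivity

/-- The Jacobian of the map from normal directions to radial directions is
`h det(∇²h + hI) / ρⁿ`. The derivative of `radMap F` at `x` factors as `|∇F|⁻¹` times a product of
two rank-one perturbations of the identity, of determinants `1` and `h`, and the operator
`Hess F + x ⊗ x`. -/
lemma radJac_eq (hF : IsSupportFn n F) {x : Euc n} (hx : x ∈ USphere n) :
    radJac F x = F x * sphDet n F x / ‖gradient F x‖ ^ n := by
  have hx1 : ‖x‖ = 1 := by simpa using hx
  have hx0 : x ≠ 0 := by rintro rfl; simp at hx1
  set p := gradient F x with hp
  have hp0 : p ≠ 0 := hF.gradient_ne_zero hx0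
  have hpn : ‖p‖ ≠ 0 := norm_ne_zero_iff.2 hp0
  have hpx : ⟪p, x⟫ = F x := hF.inner_gradient_self hx0
  have hF0 : F x ≠ 0 := (hF.pos_of_ne_zero hx0).ne'
  set h := F x
  set B : Euc n →L[ℝ] Euc n := hessOp n F x + (innerSL ℝ x).smulRight x with hB
  -- `w` is orthogonal to `p` and pairs with vectors of `x^⊥` as `-p / |p|²` does; so `id + p ⊗ w` has
  -- determinant `1` and removes the component along `p` from the vectors of `x^⊥`
  set w : Euc n := ((‖p‖ ^ 2 - h ^ 2) / (‖p‖ ^ 2 * h)) • x - (‖p‖ ^ 2)⁻¹ • (p - h • x) with hw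
  have hwp : ⟪w, p⟫ = 0 := by
    simp only [hw, inner_sub_left, inner_smul_left, real_inner_self_eq_norm_sq,
      real_inner_comm p x, hpx]
    simp
    field_simp
    ring
  set T₁ : Euc n →ₗ[ℝ] Euc n := LinearMap.transvection (innerSL ℝ w : Euc n →ₗ[ℝ] ℝ) p
  set T₂ : Euc n →ₗ[ℝ] Euc n := LinearMap.transvection (innerSL ℝ x : Euc n →ₗ[ℝ] ℝ) (p - x)
  have hT₁ : LinearMap.det T₁ = 1 := by
    simp only [T₁, LinearMap.transvection.det]
    simp [hwp]
  have hT₂ : LinearMap.det T₂ = h := by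
    simp only [T₂, LinearMap.transvection.det]
    simp [inner_sub_right, hx1, real_inner_comm p x, hpx]
  have hder : ((fderiv ℝ (radMap F) x : Euc n →L[ℝ] Euc n) : Euc n →ₗ[ℝ] Euc n)
      = ‖p‖⁻¹ • (T₁ ∘ₗ T₂ ∘ₗ (B : Euc n →ₗ[ℝ] Euc n)) := by
    have hA := hF.hasFDerivAt_gradient hx0
    have hN : HasFDerivAt (fun y => ‖gradient F y‖)
        ((‖p‖⁻¹ • innerSL ℝ p) ∘L hessOp n F x) x := (hasFDerivAt_norm_euc hp0).comp x hA
    have hI : HasFDerivAt (fun y => ‖gradient F y‖⁻¹)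
        ((-(‖p‖ ^ 2)⁻¹) • ((‖p‖⁻¹ • innerSL ℝ p) ∘L hessOp n F x)) x :=
      (hasDerivAt_inv hpn).comp_hasFDerivAt x hN
    have hR := (hasFDerivAt_norm_euc hx0).smul (hI.smul hA)
    have hfd : fderiv ℝ (radMap F) x = _ := hR.fderiv
    rw [hfd]
    ext1 v
    have hxA : ⟪x, hessOp n F x v⟫ = 0 := by
      rw [real_inner_comm]; exact hF.inner_hessOp_self hx0 v
    have e2 : T₂ (B v) = hessOp n F x v + ⟪x, v⟫ • p := by
      simp [T₂, LinearMap.transvection.apply, hB, inner_add_right, hxA, inner_smul_right, hx1]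
      module
    have e1 : T₁ (T₂ (B v)) = hessOp n F x v + ⟪x, v⟫ • p
        - ((‖p‖ ^ 2)⁻¹ * ⟪p, hessOp n F x v⟫) • p := by
      have : ⟪w, hessOp n F x v⟫ = - ((‖p‖ ^ 2)⁻¹ * ⟪p, hessOp n F x v⟫) := by
        simp [hw, inner_sub_left, inner_smul_left, hxA]
      rw [e2]
      simp only [T₁, LinearMap.transvection.apply, ContinuousLinearMap.coe_coe, innerSL_apply_apply,
        inner_add_right, inner_smul_right, hwp, this]
      module
    simp only [LinearMap.smul_apply, LinearMap.comp_apply, ContinuousLinearMap.coe_coe, e1]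
    simp [hx1, ← hp]
    module
  have hdet : (fderiv ℝ (radMap F) x).det = h * sphDet n F x / ‖p‖ ^ n := by
    have : LinearMap.det (B : Euc n →ₗ[ℝ] Euc n) = sphDet n F x := rfl
    rw [ContinuousLinearMap.det, hder, LinearMap.det_smul, LinearMap.det_comp, LinearMap.det_comp,
      hT₁, hT₂, this, finrank_euclideanSpace_fin, inv_pow]
    ring
  rw [radJac, hdet, abs_of_nonneg]
  have := hF.sphDet_pos hx
  have := hF.pos_of_ne_zero hx0
  positivity

/-- The flow's `√(|∇h|² + h²)` is the norm of the Euclidean gradient, the distance from the origin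
of the boundary point with outer normal `x`. -/
lemma radTerm_eq (hF : IsSupportFn n F) {x : Euc n} (hx : x ∈ USphere n) :
    radTerm n F x = ‖gradient F x‖ := by
  have hx1 : ‖x‖ = 1 := by simpa using hx
  have hx0 : x ≠ 0 := by rintro rfl; simp at hx1
  have h := hF.inner_gradient_self hx0
  rw [radTerm, ← Real.sqrt_sq (norm_nonneg (gradient F x))]
  congr 1
  rw [sphGrad, h, norm_sub_sq_real, inner_smul_right, h, norm_smul, hx1]
  simp
  ring

lemma radMap_injOn (hF : IsSupportFn n F) : InjOn (radMap F) {(0 : Euc n)}ᶜ := by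
  intro x hx y hy hxy
  have hx : x ≠ 0 := hx
  have hy : y ≠ 0 := hy
  have hn : ‖x‖ = ‖y‖ := by rw [← hF.norm_radMap hx, hxy, hF.norm_radMap hy]
  have hd : gdir F x = gdir F y := by
    have : ‖x‖ • gdir F x = ‖x‖ • gdir F y := by
      have := hxy; simp only [radMap] at this; rw [this, hn]
    exact smul_right_injective _ (norm_ne_zero_iff.2 hx) this
  have hpx := norm_pos_iff.2 (hF.gradient_ne_zero hx)
  have hpy := norm_pos_iff.2 (hF.gradient_ne_zero hy)
  -- the two boundary points lie on the same ray, so each supporting inequality compares norms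
  have e1 : ⟪gradient F y, x⟫ = ‖gradient F y‖ / ‖gradient F x‖ * F x := by
    have : gradient F y = ‖gradient F y‖ • gdir F x := by
      rw [hd, gdir, smul_smul, mul_inv_cancel₀ hpy.ne', one_smul]
    rw [this, gdir, inner_smul_left, inner_smul_left, hF.inner_gradient_self hx, ← gdir,
      norm_smul, hF.norm_gdir hx]
    simp; ring
  have e2 : ⟪gradient F x, y⟫ = ‖gradient F x‖ / ‖gradient F y‖ * F y := by
    have : gradient F x = ‖gradient F x‖ • gdir F y := by
      rw [← hd, gdir, smul_smul, mul_inv_cancel₀ hpx.ne', one_smul]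
    rw [this, gdir, inner_smul_left, inner_smul_left, hF.inner_gradient_self hy, ← gdir,
      norm_smul, hF.norm_gdir hy]
    simp; ring
  have l1 : ‖gradient F y‖ ≤ ‖gradient F x‖ := by
    have := hF.inner_gradient_le hy hx
    rw [e1] at this
    exact (div_le_one hpx).1 ((mul_le_iff_le_one_left (hF.pos_of_ne_zero hx)).1 this)
  by_contra hne
  have hlt : ⟪gradient F x, y⟫ < F y := by
    refine hF.inner_gradient_lt hx hy fun c hc h => hne ?_
    have : c = 1 := by
      have h2 := congrArg norm h
      rw [norm_smul, Real.norm_of_nonneg hc.le, hn] at h2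
      exact (mul_eq_right₀ (norm_ne_zero_iff.2 hy)).1 h2.symm
    rw [h, this, one_smul]
  rw [e2] at hlt
  have := (div_lt_one hpy).1 ((mul_lt_iff_lt_one_left (hF.pos_of_ne_zero hy)).1 hlt)
  linarith

end IsSupportFn

/-! ### The radial function and the change of variables on the sphere -/

lemma sphere_ne_zero {n : ℕ} {x : Euc n} (hx : x ∈ USphere n) : x ≠ 0 :=
  ne_zero_of_mem_unit_sphere ⟨x, hx⟩

/-- The reciprocal `max_x ⟨x, u⟩ / F x` of the radial function in direction `u`. -/
def maxRatio {n : ℕ} (F : Euc n → ℝ) (u : Euc n) : ℝ :=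
  sSup ((fun x : USphere n => ⟪(x : Euc n), u⟫ / F x) '' univ)

/-- Integration in polar coordinates of a `0`-homogeneous function over the unit ball. -/
lemma integral_cone {n : ℕ} (hn : 2 ≤ n) (G : Euc n → ℝ) :
    ∫ x in {(0 : Euc n)}ᶜ, (Iio (1 : ℝ)).indicator 1 ‖x‖ * G (‖x‖⁻¹ • x)
      = sphInt n G * (n : ℝ)⁻¹ := by
  have hmp := (volume : Measure (Euc n)).measurePreserving_homeomorphUnitSphereProd
  have h1 := hmp.integral_comp (homeomorphUnitSphereProd (Euc n)).measurableEmbedding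
    (fun z => G z.1 * (Iio (1 : ℝ)).indicator 1 (z.2 : ℝ))
  rw [integral_prod_mul (fun s : USphere n => G s)
    (fun r : Ioi (0 : ℝ) => (Iio (1 : ℝ)).indicator 1 (r : ℝ))] at h1
  rw [← integral_subtype_comap (measurableSet_singleton _).compl]
  have h2 : ∫ r : Ioi (0 : ℝ), (Iio (1 : ℝ)).indicator 1 (r : ℝ)
      ∂(Measure.volumeIoiPow (Module.finrank ℝ (Euc n) - 1)) = (n : ℝ)⁻¹ := by
    have : (fun r : Ioi (0 : ℝ) => (Iio (1 : ℝ)).indicator (1 : ℝ → ℝ) (r : ℝ))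
        = (Iio (⟨1, mem_Ioi.2 one_pos⟩ : Ioi (0 : ℝ))).indicator 1 := by
      ext r; simp [indicator, ← Subtype.coe_lt_coe]
    rw [this, integral_indicator_one measurableSet_Iio, measureReal_def,
      Measure.volumeIoiPow_apply_Iio, finrank_euclideanSpace_fin, ENNReal.toReal_ofReal
      (by positivity), Nat.cast_sub (by omega)]
    simp
  rw [h2] at h1
  rw [sphInt, sphMeasure, ← h1]
  refine integral_congr_ae (Eventually.of_forall fun x => ?_)
  simp [mul_comm]

namespace IsSupportFn

variable {n : ℕ} {F : Euc n → ℝ}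

lemma continuous_sphere (hF : IsSupportFn n F) : Continuous fun x : USphere n => F x :=
  hF.smooth.continuousOn.comp_continuous continuous_subtype_val fun x => sphere_ne_zero x.2

lemma gdir_mem (hF : IsSupportFn n F) {x : Euc n} (hx : x ∈ USphere n) :
    gdir F x ∈ USphere n := by
  simpa using hF.norm_gdir (sphere_ne_zero hx)

lemma isGreatest_maxRatio (hF : IsSupportFn n F) {u : Euc n} (hu : u ∈ USphere n) :
    IsGreatest ((fun x : USphere n => ⟪(x : Euc n), u⟫ / F x) '' univ) (maxRatio F u) := by
  have : Nonempty (USphere n) := ⟨⟨u, hu⟩⟩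
  have hc : Continuous fun x : USphere n => ⟪(x : Euc n), u⟫ / F x :=
    (by fun_prop : Continuous fun x : USphere n => ⟪(x : Euc n), u⟫).div hF.continuous_sphere
      fun x => (hF.pos x x.2).ne'
  exact (isCompact_univ.image hc).isGreatest_sSup (univ_nonempty.image _)

lemma le_maxRatio (hF : IsSupportFn n F) {u x : Euc n} (hu : u ∈ USphere n)
    (hx : x ∈ USphere n) : ⟪x, u⟫ / F x ≤ maxRatio F u :=
  (hF.isGreatest_maxRatio hu).2 ⟨⟨x, hx⟩, trivial, rfl⟩

lemma maxRatio_pos (hF : IsSupportFn n F) {u : Euc n} (hu : u ∈ USphere n) :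
    0 < maxRatio F u := by
  refine lt_of_lt_of_le ?_ (hF.le_maxRatio hu hu)
  have := hF.pos u hu
  have := real_inner_self_pos.2 (sphere_ne_zero hu)
  positivity

lemma radialFn_eq (hF : IsSupportFn n F) {u : Euc n} (hu : u ∈ USphere n) :
    radialFn n F u = (maxRatio F u)⁻¹ := by
  have hM := hF.maxRatio_pos hu
  have : {r : ℝ | 0 < r ∧ r • u ∈ bodyOf n F} = Ioc 0 (maxRatio F u)⁻¹ := by
    ext r
    simp only [mem_ofPred_eq, mem_Ioc, bodyOf, inner_smul_right]
    refine and_congr_right fun hr => ⟨fun h => ?_, fun h x hx => ?_⟩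
    · obtain ⟨x, -, hx⟩ := (hF.isGreatest_maxRatio hu).1
      have h1 := h x x.2
      have h2 : ⟪(x : Euc n), u⟫ = maxRatio F u * F x := by
        rw [← hx]; field_simp [(hF.pos x x.2).ne']
      rw [h2] at h1
      rw [← one_div, le_div_iff₀ hM]
      have := hF.pos x x.2
      nlinarith
    · have h1 := (div_le_iff₀ (hF.pos x hx)).1 (hF.le_maxRatio hu hx)
      rw [← one_div, le_div_iff₀ hM] at h
      have := hF.pos x hx
      nlinarith
  rw [radialFn, this, csSup_Ioc (inv_pos.2 hM)]

lemma inner_gdir (hF : IsSupportFn n F) {x : Euc n} (hx : x ∈ USphere n) :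
    ⟪x, gdir F x⟫ = ‖gradient F x‖⁻¹ * F x := by
  rw [gdir, inner_smul_right, real_inner_comm, hF.inner_gradient_self (sphere_ne_zero hx)]

lemma inner_gdir_pos (hF : IsSupportFn n F) {x : Euc n} (hx : x ∈ USphere n) :
    0 < ⟪x, gdir F x⟫ := by
  rw [hF.inner_gdir hx]
  have := hF.pos x hx
  have := norm_pos_iff.2 (hF.gradient_ne_zero (sphere_ne_zero hx))
  positivity

/-- In the direction of the boundary point with outer normal `x`, the maximum defining `maxRatio`
is attained at `x`. -/
lemma maxRatio_gdir (hF : IsSupportFn n F) {x : Euc n} (hx : x ∈ USphere n) :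
    maxRatio F (gdir F x) = ⟪x, gdir F x⟫ / F x := by
  refine le_antisymm ?_ (hF.le_maxRatio (hF.gdir_mem hx) hx)
  obtain ⟨y, -, hy⟩ := (hF.isGreatest_maxRatio (hF.gdir_mem hx)).1
  have hFy := hF.pos y y.2
  have hFx := hF.pos x hx
  rw [← hy, hF.inner_gdir hx, mul_div_assoc, div_self hFx.ne', mul_one]
  show ⟪(y : Euc n), gdir F x⟫ / F y ≤ _
  rw [div_le_iff₀ hFy, gdir, inner_smul_right, real_inner_comm]
  gcongr
  exact hF.inner_gradient_le (sphere_ne_zero hx) (sphere_ne_zero y.2)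

/-- The body lies in its supporting half-space with normal `x`, which bounds its radial function in
every direction `u` pointing into that half-space. -/
lemma log_radialFn_le (hF : IsSupportFn n F) {x u : Euc n} (hx : x ∈ USphere n)
    (hu : u ∈ USphere n) (hxu : 0 < ⟪x, u⟫) :
    Real.log (radialFn n F u) ≤ Real.log (F x) - Real.log ⟪x, u⟫ := by
  have hFx := hF.pos x hx
  rw [hF.radialFn_eq hu, Real.log_inv, ← Real.log_div hFx.ne' hxu.ne', ← inv_div, Real.log_inv,
    neg_le_neg_iff]
  exact Real.log_le_log (by positivity) (hF.le_maxRatio hu hx)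

lemma log_radialFn_gdir (hF : IsSupportFn n F) {x : Euc n} (hx : x ∈ USphere n) :
    Real.log (radialFn n F (gdir F x)) = Real.log (F x) - Real.log ⟪x, gdir F x⟫ := by
  rw [hF.radialFn_eq (hF.gdir_mem hx), hF.maxRatio_gdir hx, inv_div,
    Real.log_div (hF.pos x hx).ne' (hF.inner_gdir_pos hx).ne']

/-- Every direction is the direction of a boundary point: if `x₀` maximises `⟨x, u⟩ / F x`, with
maximum `m`, then `⟨·, u⟩ - m F` has a maximum at `x₀`, so that `u = m ∇F x₀`. -/
lemma exists_gdir_eq (hF : IsSupportFn n F) {u : Euc n} (hu : u ∈ USphere n) :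
    ∃ x ∈ USphere n, gdir F x = u := by
  obtain ⟨x, -, hx⟩ := (hF.isGreatest_maxRatio hu).1
  have hm := hF.maxRatio_pos hu
  have hx0 : (x : Euc n) ≠ 0 := sphere_ne_zero x.2
  refine ⟨x, x.2, ?_⟩
  set m := maxRatio F u
  have hmax : IsLocalMax (fun z : Euc n => ⟪u, z⟫ - m * F z) x := by
    filter_upwards [isOpen_compl_singleton.mem_nhds hx0] with z hz
    have hz : z ≠ 0 := hz
    have hn : 0 < ‖z‖ := norm_pos_iff.2 hz
    have h1 := hF.le_maxRatio hu (x := ‖z‖⁻¹ • z) (by simp [norm_smul, hn.ne'])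
    rw [hF.homog _ (inv_pos.2 hn), inner_smul_left] at h1
    simp only [map_inv₀, RCLike.conj_to_real] at h1
    rw [mul_div_mul_left _ _ (inv_pos.2 hn).ne', div_le_iff₀ (hF.pos_of_ne_zero hz)] at h1
    have h2 : ⟪u, (x : Euc n)⟫ - m * F x = 0 := by
      rw [← hx, real_inner_comm]
      field_simp [(hF.pos x x.2).ne']
      ring
    show ⟪u, z⟫ - m * F z ≤ ⟪u, (x : Euc n)⟫ - m * F x
    rw [h2, real_inner_comm]
    linarith
  have hd : HasFDerivAt (fun z : Euc n => ⟪u, z⟫ - m * F z)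
      (innerSL ℝ u - m • innerSL ℝ (gradient F x)) x :=
    (innerSL ℝ u).hasFDerivAt.sub ((hF.hasFDerivAt hx0).const_mul m)
  have h0 := hmax.hasFDerivAt_eq_zero hd
  have hup : u = m • gradient F x := by
    refine ext_inner_right ℝ fun v => ?_
    have := congrArg (fun L : Euc n →L[ℝ] ℝ => L v) h0
    simp only [sub_apply, smul_apply, innerSL_apply_apply] at this
    rw [inner_smul_left]
    simpa [sub_eq_zero] using this
  have hmn : m = ‖gradient F x‖⁻¹ := by
    have h1 : ‖u‖ = 1 := by simpa using hu
    rw [hup, norm_smul, Real.norm_of_nonneg hm.le] at h1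
    exact eq_inv_of_mul_eq_one_left h1
  rw [gdir, ← hmn, ← hup]

lemma radMap_image (hF : IsSupportFn n F) : radMap F '' {(0 : Euc n)}ᶜ = {(0 : Euc n)}ᶜ := by
  ext y
  constructor
  · rintro ⟨x, hx, rfl⟩
    have hx : x ≠ 0 := hx
    exact norm_ne_zero_iff.1 (by rw [hF.norm_radMap hx]; exact norm_ne_zero_iff.2 hx)
  · intro hy
    have hn : 0 < ‖y‖ := norm_pos_iff.2 hy
    obtain ⟨x, hx, hxy⟩ := hF.exists_gdir_eq (u := ‖y‖⁻¹ • y) (by simp [norm_smul, hn.ne'])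
    refine ⟨‖y‖ • x, smul_ne_zero hn.ne' (sphere_ne_zero hx), ?_⟩
    have hx1 : ‖x‖ = 1 := by simpa using hx
    rw [hF.radMap_smul hn, radMap, hx1, one_smul, hxy, smul_smul, mul_inv_cancel₀ hn.ne', one_smul]

/-- Change of variables from radial directions to normal directions on the sphere. Both sides are
integrals of `0`-homogeneous functions over the unit ball, related by the norm-preserving map
`radMap F`. -/
lemma sphInt_comp_gdir (hn : 2 ≤ n) (hF : IsSupportFn n F) (g : Euc n → ℝ) :
    sphInt n g = sphInt n fun x => radJac F x * g (gdir F x) := by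
  have h1 := integral_image_eq_integral_abs_det_fderiv_smul (volume : Measure (Euc n))
    (measurableSet_singleton (0 : Euc n)).compl
    (fun x hx => (hF.radMap_differentiableAt hx).hasFDerivAt.hasFDerivWithinAt) hF.radMap_injOn
    (fun y => (Iio (1 : ℝ)).indicator 1 ‖y‖ * g (‖y‖⁻¹ • y))
  rw [hF.radMap_image, integral_cone hn] at h1
  have h2 := integral_cone hn fun x => radJac F x * g (gdir F x)
  have h3 : sphInt n g * (n : ℝ)⁻¹ = (sphInt n fun x => radJac F x * g (gdir F x)) * (n : ℝ)⁻¹ := by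
    rw [h1, ← h2]
    refine setIntegral_congr_fun (measurableSet_singleton _).compl fun x hx => ?_
    have hx : x ≠ 0 := hx
    have hx' : ‖x‖ ≠ 0 := norm_ne_zero_iff.2 hx
    have hpos : 0 < ‖x‖⁻¹ := inv_pos.2 (norm_pos_iff.2 hx)
    have h4 : ‖x‖⁻¹ • radMap F x = gdir F x := by
      rw [radMap, smul_smul, inv_mul_cancel₀ hx', one_smul]
    simp only [hF.norm_radMap hx, smul_eq_mul, h4, hF.radJac_smul hpos, hF.gdir_smul hpos]
    rw [radJac]
    ring
  have hn0 : (n : ℝ)⁻¹ ≠ 0 := inv_ne_zero (by norm_cast; omega)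
  exact mul_right_cancel₀ hn0 h3

end IsSupportFn

/-! ### Upper barriers with vanishing derivative -/

/-- A continuous function on `[a, b]` which at every point of `[a, b)` has a differentiable upper
barrier touching it there, with derivative `0`, does not exceed its initial value. -/
lemma le_of_upper_barrier {G : ℝ → ℝ} {a b : ℝ} (hab : a ≤ b) (hG : ContinuousOn G (Icc a b))
    (h : ∀ t ∈ Ico a b, ∃ A : ℝ → ℝ, HasDerivAt A 0 t ∧ A t = 0 ∧
      ∀ᶠ s in 𝓝 t, G s - G t ≤ A s) : G b ≤ G a := by
  refine image_le_of_liminf_slope_right_le_deriv_boundary (B := fun _ => G a) (B' := fun _ => 0)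
    hG le_rfl continuousOn_const (fun x _ => hasDerivWithinAt_const _ _ _) (fun t ht r hr => ?_)
    (right_mem_Icc.2 hab)
  obtain ⟨A, hA, hA0, hle⟩ := h t ht
  have h1 : ∀ᶠ s in 𝓝[>] t, slope A t s < r :=
    (hasDerivWithinAt_iff_tendsto_slope' (lt_irrefl t)).1 (hA.hasDerivWithinAt (s := Ioi t))
      |>.eventually (gt_mem_nhds hr)
  refine Eventually.frequently ?_
  filter_upwards [h1, self_mem_nhdsWithin, mem_nhdsWithin_of_mem_nhds hle] with s h1 hs hle
  refine lt_of_le_of_lt ?_ h1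
  rw [slope_def_field, slope_def_field, hA0, sub_zero]
  have : 0 < s - t := sub_pos.2 hs
  gcongr

/-- A continuous function on `[0, T)` which at every interior point has an upper barrier with
derivative `0` is constant: apply `le_of_upper_barrier` to the function and to its reflection. -/
lemma const_of_upper_barrier {G : ℝ → ℝ} {T : ℝ} (hG : ContinuousOn G (Ico 0 T))
    (h : ∀ t ∈ Ioo 0 T, ∃ A : ℝ → ℝ, HasDerivAt A 0 t ∧ A t = 0 ∧
      ∀ᶠ s in 𝓝 t, G s - G t ≤ A s) {t : ℝ} (ht : t ∈ Ico 0 T) : G t = G 0 := by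
  have key : ∀ a ∈ Ioo 0 t, G t = G a := by
    intro a ha
    have hsub : Icc a t ⊆ Ioo 0 T := fun s hs => ⟨ha.1.trans_le hs.1, hs.2.trans_lt ht.2⟩
    have hGc : ContinuousOn G (Icc a t) := hG.mono (hsub.trans Ioo_subset_Ico_self)
    refine le_antisymm ?_ ?_
    · exact le_of_upper_barrier ha.2.le hGc fun s hs => h s (hsub (Ico_subset_Icc_self hs))
    · have := le_of_upper_barrier (G := fun s => G (-s)) (neg_le_neg ha.2.le)
        (hGc.comp continuous_neg.continuousOn fun s hs => ⟨by linarith [hs.2], by linarith [hs.1]⟩)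
        (fun s hs => ?_)
      · simpa using this
      · obtain ⟨A, hA, hA0, hle⟩ := h (-s) (hsub ⟨by linarith [hs.2], by linarith [hs.1]⟩)
        refine ⟨fun z => A (-z), ?_, hA0, continuous_neg.continuousAt.eventually hle⟩
        simpa [Function.comp_def] using hA.scomp s (hasDerivAt_neg s)
  rcases ht.1.eq_or_lt with rfl | h0
  · rfl
  have hlim : Tendsto G (𝓝[>] 0) (𝓝 (G 0)) :=
    ((hG 0 ⟨le_rfl, h0.trans ht.2⟩).mono_of_mem_nhdsWithin
      (mem_of_superset (Ioo_mem_nhdsGT (h0.trans ht.2)) Ioo_subset_Ico_self))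
  refine tendsto_nhds_unique (tendsto_const_nhds.congr' ?_) hlim
  filter_upwards [Ioo_mem_nhdsGT h0] with a ha using key a ha

/-! ### The integral of the logarithmic radial function along the flow -/

instance {n : ℕ} : IsFiniteMeasure (sphMeasure n) :=
  inferInstanceAs (IsFiniteMeasure (volume : Measure (Euc n)).toSphere)

lemma integrable_sphere {n : ℕ} {g : USphere n → ℝ} (hg : Continuous g) :
    Integrable g (sphMeasure n) :=
  hg.integrable_of_hasCompactSupport (HasCompactSupport.of_compactSpace g)

namespace IsFlowSol

variable {n : ℕ} {f : Euc n → ℝ} {φ : ℝ → ℝ} {T : ℝ} {H : ℝ → Euc n → ℝ}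

lemma continuous_maxRatio (hH : IsFlowSol n f φ (Ico 0 T) H) :
    Continuous fun q : Ico (0 : ℝ) T × USphere n => maxRatio (H q.1) (q.2 : Euc n) := by
  refine IsCompact.continuous_sSup (f := fun (q : Ico (0 : ℝ) T × USphere n) (x : USphere n) =>
    ⟪(x : Euc n), (q.2 : Euc n)⟫ / H q.1 x) isCompact_univ ?_
  have h : Continuous fun z : (Ico (0 : ℝ) T × USphere n) × USphere n => H z.1.1 z.2 :=
    hH.smooth.continuousOn.comp_continuous
      (f := fun z : (Ico (0 : ℝ) T × USphere n) × USphere n => ((z.1.1 : ℝ), (z.2 : Euc n)))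
      (by fun_prop) fun z => ⟨z.1.1.2, sphere_ne_zero z.2.2⟩
  exact Continuous.div (by fun_prop) h fun z => ((hH.body _ z.1.1.2).pos _ z.2.2).ne'

lemma continuous_log_radialFn (hH : IsFlowSol n f φ (Ico 0 T) H) :
    Continuous fun q : Ico (0 : ℝ) T × USphere n =>
      Real.log (radialFn n (H q.1) (q.2 : Euc n)) := by
  have h := (hH.continuous_maxRatio.inv₀ fun q =>
    ((hH.body _ q.1.2).maxRatio_pos q.2.2).ne').log fun q =>
    (inv_pos.2 ((hH.body _ q.1.2).maxRatio_pos q.2.2)).ne'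
  exact h.congr fun q => by
    rw [(hH.body _ q.1.2).radialFn_eq q.2.2]; rfl

lemma continuousOn_integral (hH : IsFlowSol n f φ (Ico 0 T) H) :
    ContinuousOn (fun t => sphInt n fun u => Real.log (radialFn n (H t) u)) (Ico 0 T) := by
  rw [continuousOn_iff_continuous_domRestrict]
  have : LocallyCompactSpace (Ico (0 : ℝ) T) := isLocallyClosed_Ico.locallyCompactSpace
  have h := continuous_parametric_integral_of_continuous (μ := sphMeasure n)
    (f := fun (t : Ico (0 : ℝ) T) (u : USphere n) => Real.log (radialFn n (H t) (u : Euc n)))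
    hH.continuous_log_radialFn isCompact_univ
  simp only [Measure.restrict_univ] at h
  exact h

lemma continuous_log_radialFn_slice (hH : IsFlowSol n f φ (Ico 0 T) H) {t : ℝ} (ht : t ∈ Ico 0 T) :
    Continuous fun u : USphere n => Real.log (radialFn n (H t) u) :=
  hH.continuous_log_radialFn.comp (f := fun u : USphere n => ((⟨t, ht⟩ : Ico (0 : ℝ) T), u))
    (by fun_prop)

/-- The envelope inequality for `t ↦ ∫ log ρ`: the radial function at time `s` in the direction
`gdir (H t) x` is at most the one given by the supporting half-space with normal `x`. -/
lemma integral_sub_le (hn : 2 ≤ n) (hH : IsFlowSol n f φ (Ico 0 T) H) {s t : ℝ}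
    (hs : s ∈ Ico 0 T) (ht : t ∈ Ico 0 T) :
    (sphInt n fun u => Real.log (radialFn n (H s) u))
      - (sphInt n fun u => Real.log (radialFn n (H t) u))
      ≤ ∫ x : USphere n, radJac (H t) x * (Real.log (H s x) - Real.log (H t x))
        ∂(sphMeasure n) := by
  have hFs := hH.body s hs
  have hFt := hH.body t ht
  have hcs := hH.continuous_log_radialFn_slice hs
  have hct := hH.continuous_log_radialFn_slice ht
  have hJ : Continuous fun x : USphere n => radJac (H t) x :=
    hFt.continuousOn_radJac.comp_continuous continuous_subtype_val fun x => sphere_ne_zero x.2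
  obtain ⟨g, hg, hgx⟩ : ∃ g : USphere n → USphere n, Continuous g ∧
      ∀ x : USphere n, (g x : Euc n) = gdir (H t) x :=
    ⟨fun x => ⟨gdir (H t) x, hFt.gdir_mem x.2⟩,
      (hFt.contDiffOn_gdir.continuousOn.comp_continuous continuous_subtype_val
        fun x => sphere_ne_zero x.2).subtype_mk _, fun _ => rfl⟩
  have hlog : ∀ r ∈ Ico 0 T, Continuous fun x : USphere n => Real.log (H r x) := fun r hr =>
    (hH.body r hr).continuous_sphere.log fun x => ((hH.body r hr).pos x x.2).ne'
  have h1 : (sphInt n fun u => Real.log (radialFn n (H s) u))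
      - (sphInt n fun u => Real.log (radialFn n (H t) u))
      = sphInt n fun u => Real.log (radialFn n (H s) u) - Real.log (radialFn n (H t) u) :=
    (integral_sub (integrable_sphere hcs) (integrable_sphere hct)).symm
  have hc1 : Continuous fun x : USphere n => radJac (H t) x *
      (Real.log (radialFn n (H s) (gdir (H t) x)) - Real.log (radialFn n (H t) (gdir (H t) x))) := by
    simp only [← hgx]
    exact hJ.mul ((hcs.comp hg).sub (hct.comp hg))
  have hc2 : Continuous fun x : USphere n =>
      radJac (H t) x * (Real.log (H s x) - Real.log (H t x)) :=
    hJ.mul ((hlog s hs).sub (hlog t ht))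
  rw [h1, hFt.sphInt_comp_gdir hn]
  refine integral_mono (integrable_sphere hc1) (integrable_sphere hc2) fun x => ?_
  have hJ0 : 0 ≤ radJac (H t) x := abs_nonneg _
  have e1 := hFs.log_radialFn_le x.2 (hFt.gdir_mem x.2) (hFt.inner_gdir_pos x.2)
  have e2 := hFt.log_radialFn_gdir x.2
  have e3 : Real.log (radialFn n (H s) (gdir (H t) x)) -
      Real.log (radialFn n (H t) (gdir (H t) x)) ≤ Real.log (H s x) - Real.log (H t x) := by
    linarith
  exact mul_le_mul_of_nonneg_left e3 hJ0

/-- Along the flow, the upper barrier of `integral_sub_le` has derivative `0`: the flow equation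
turns it into `∫ radJac - η ∫ f / φ(1/h)`, and both terms equal `|S^{n-1}|`. -/
lemma hasDerivAt_barrier (hn : 2 ≤ n) (hf_smooth : ContDiffOn ℝ (⊤ : ℕ∞) f {(0 : Euc n)}ᶜ)
    (hf_pos : ∀ x ∈ USphere n, 0 < f x)
    (hφ_smooth : ContDiffOn ℝ (⊤ : ℕ∞) φ (Ioi 0)) (hφ_pos : ∀ s ∈ Ioi (0 : ℝ), 0 < φ s)
    (hH : IsFlowSol n f φ (Ico 0 T) H) {t : ℝ} (ht : t ∈ Ioo 0 T) :
    HasDerivAt (fun s => ∫ x : USphere n,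
      radJac (H t) x * (Real.log (H s x) - Real.log (H t x)) ∂(sphMeasure n)) 0 t := by
  have htI : t ∈ Ico 0 T := Ioo_subset_Ico_self ht
  have hFt := hH.body t htI
  set P : ℝ × Euc n → ℝ := fun p => H p.1 p.2
  have hopen : IsOpen (Ioo 0 T ×ˢ {(0 : Euc n)}ᶜ) := isOpen_Ioo.prod isOpen_compl_singleton
  have hP : ContDiffOn ℝ (⊤ : ℕ∞) P (Ioo 0 T ×ˢ {(0 : Euc n)}ᶜ) :=
    hH.smooth.mono (prod_mono Ioo_subset_Ico_self le_rfl)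
  set D : ℝ × Euc n → ℝ := fun p => fderiv ℝ P p (1, 0)
  have hD : ContinuousOn D (Ioo 0 T ×ˢ {(0 : Euc n)}ᶜ) :=
    ((hP.fderiv_of_isOpen (m := (⊤ : ℕ∞)) hopen (by simp)).continuousOn).clm_apply
      continuousOn_const
  have hDer : ∀ s ∈ Ioo 0 T, ∀ x : USphere n, HasDerivAt (fun s => H s x) (D (s, x)) s := by
    intro s hs x
    have hx0 : (x : Euc n) ≠ 0 := sphere_ne_zero x.2
    have hmem : (s, (x : Euc n)) ∈ Ioo 0 T ×ˢ {(0 : Euc n)}ᶜ := ⟨hs, hx0⟩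
    have hd : HasFDerivAt P (fderiv ℝ P (s, (x : Euc n))) (s, (x : Euc n)) :=
      ((hP.contDiffAt (hopen.mem_nhds hmem)).differentiableAt (by simp)).hasFDerivAt
    have h2 : HasDerivAt (fun r : ℝ => (r, (x : Euc n))) ((1 : ℝ), (0 : Euc n)) s :=
      (hasDerivAt_id s).prodMk (hasDerivAt_const s (x : Euc n))
    have h3 := HasFDerivAt.comp_hasDerivAt (f := fun r : ℝ => (r, (x : Euc n))) s hd h2
    exact h3
  have hJ : Continuous fun x : USphere n => radJac (H t) x :=
    hFt.continuousOn_radJac.comp_continuous continuous_subtype_val fun x => sphere_ne_zero x.2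
  have hlog : ∀ r ∈ Ico 0 T, Continuous fun x : USphere n => Real.log (H r x) := fun r hr =>
    (hH.body r hr).continuous_sphere.log fun x => ((hH.body r hr).pos x x.2).ne'
  -- the derivative of the integrand, jointly continuous in time and position
  set F' : ℝ → USphere n → ℝ := fun s x => radJac (H t) x * (D (s, x) / H s x)
  have hF' : ContinuousOn (fun q : ℝ × USphere n => F' q.1 q.2) (Ioo 0 T ×ˢ univ) := by
    have hm : MapsTo (fun q : ℝ × USphere n => (q.1, (q.2 : Euc n))) (Ioo 0 T ×ˢ univ)
        (Ioo 0 T ×ˢ {(0 : Euc n)}ᶜ) := fun q hq => ⟨hq.1, sphere_ne_zero q.2.2⟩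
    have hc : Continuous fun q : ℝ × USphere n => (q.1, (q.2 : Euc n)) := by fun_prop
    have c1 : ContinuousOn (fun q : ℝ × USphere n => radJac (H t) q.2) (Ioo 0 T ×ˢ univ) :=
      (hJ.comp continuous_snd).continuousOn
    have c2 : ContinuousOn (fun q : ℝ × USphere n => D (q.1, (q.2 : Euc n))) (Ioo 0 T ×ˢ univ) :=
      hD.comp hc.continuousOn hm
    have c3 : ContinuousOn (fun q : ℝ × USphere n => H q.1 q.2) (Ioo 0 T ×ˢ univ) :=
      hP.continuousOn.comp hc.continuousOn hm
    exact c1.mul (c2.div c3 fun q hq => ((hH.body _ (Ioo_subset_Ico_self hq.1)).pos _ q.2.2).ne')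
  obtain ⟨ε, hε, hball⟩ := Metric.nhds_basis_closedBall.mem_iff.1 (isOpen_Ioo.mem_nhds ht)
  obtain ⟨C, hC⟩ := ((isCompact_closedBall t ε).prod (isCompact_univ (X := USphere n)))
    |>.exists_bound_of_continuousOn (hF'.mono (prod_mono hball le_rfl))
  have hmain := hasDerivAt_integral_of_dominated_loc_of_deriv_le (μ := sphMeasure n)
    (F := fun s (x : USphere n) => radJac (H t) x * (Real.log (H s x) - Real.log (H t x)))
    (F' := F') (x₀ := t) (bound := fun _ => C) (Metric.closedBall_mem_nhds t hε)
    (by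
      filter_upwards [isOpen_Ioo.mem_nhds ht] with s hs
      exact (hJ.mul ((hlog s (Ioo_subset_Ico_self hs)).sub (hlog t htI))).aestronglyMeasurable)
    (integrable_sphere (hJ.mul ((hlog t htI).sub (hlog t htI))))
    ((hF'.comp_continuous (f := fun x : USphere n => (t, x)) (by fun_prop)
      fun x => ⟨ht, trivial⟩).aestronglyMeasurable)
    (Eventually.of_forall fun x s hs => hC (s, x) ⟨hs, trivial⟩)
    (integrable_const C)
    (Eventually.of_forall fun x s hs => by
      have hs' := hball hs
      exact (((hDer s hs' x).log
        ((hH.body s (Ioo_subset_Ico_self hs')).pos x x.2).ne').sub_const _).const_mul _)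
  refine hmain.2.congr_deriv ?_
  set η := flowEta n f φ (H t) with hη
  have hφH : ∀ x : USphere n, 0 < φ (1 / H t x) := fun x =>
    hφ_pos _ (one_div_pos.2 (hFt.pos x x.2))
  have hval : ∀ x : USphere n, F' t x = radJac (H t) x - η * (f x / φ (1 / H t x)) := by
    intro x
    have hDx : D (t, x) = H t x - η * f x * radTerm n (H t) x ^ n /
        (φ (1 / H t x) * sphDet n (H t) x) :=
      (hDer t ht x).unique ((hH.eqn t htI x x.2).hasDerivAt (Ico_mem_nhds ht.1 ht.2))
    have h1 := (hφH x).ne'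
    have h2 := (hFt.pos x x.2).ne'
    have h3 := (hFt.sphDet_pos x.2).ne'
    have h4 := norm_ne_zero_iff.2 (hFt.gradient_ne_zero (sphere_ne_zero x.2))
    simp only [F', hDx, hFt.radJac_eq x.2, hFt.radTerm_eq x.2]
    generalize φ (1 / H t x) = a at *
    field_simp
  have hq : Continuous fun x : USphere n => f x / φ (1 / H t x) := by
    refine (hf_smooth.continuousOn.comp_continuous continuous_subtype_val
      fun x => sphere_ne_zero x.2).div ?_ fun x => (hφH x).ne'
    exact hφ_smooth.continuousOn.comp_continuous
      (continuous_const.div hFt.continuous_sphere fun x => (hFt.pos x x.2).ne')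
      fun x => one_div_pos.2 (hFt.pos x x.2)
  have hJint : ∫ x : USphere n, radJac (H t) x ∂(sphMeasure n) = sphArea n := by
    have := hFt.sphInt_comp_gdir hn fun _ => 1
    simp only [sphInt, mul_one] at this
    rw [← this]
    simp [sphArea, measureReal_def]
  have hIpos : 0 < sphInt n fun x => f x / φ (1 / H t x) := by
    have hpos : ∀ x : USphere n, 0 < f x / φ (1 / H t x) := fun x => div_pos (hf_pos x x.2) (hφH x)
    refine (integral_pos_iff_support_of_nonneg (fun x => (hpos x).le) (integrable_sphere hq)).2 ?_
    have hsupp : Function.support (fun x : USphere n => f x / φ (1 / H t x)) = univ :=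
      eq_univ_of_forall fun x => (hpos x).ne'
    rw [hsupp]
    have : NeZero n := ⟨by omega⟩
    exact (Measure.measure_univ_pos).2 (Measure.toSphere_ne_zero _)
  rw [integral_congr_ae (Eventually.of_forall hval),
    integral_sub (integrable_sphere hJ) ((integrable_sphere hq).const_mul _), integral_const_mul,
    hJint, hη, flowEta]
  change sphArea n - sphArea n / (sphInt n fun x => f x / φ (1 / H t x)) *
    (sphInt n fun x => f x / φ (1 / H t x)) = 0
  rw [div_mul_cancel₀ _ hIpos.ne', sub_self]

end IsFlowSol

/-- the integral of the logarithm of the radial function is constant along the flow. -/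
theorem log_radial_integral_constant
    (n : ℕ) (hn : 2 ≤ n)
    (f : Euc n → ℝ) (φ : ℝ → ℝ) (T : ℝ) (hT : 0 < T)
    (hf_smooth : ContDiffOn ℝ (⊤ : ℕ∞) f {(0 : Euc n)}ᶜ)
    (hf_pos : ∀ x ∈ USphere n, 0 < f x)
    (hφ_smooth : ContDiffOn ℝ (⊤ : ℕ∞) φ (Ioi 0))
    (hφ_pos : ∀ s ∈ Ioi (0 : ℝ), 0 < φ s)
    (H : ℝ → Euc n → ℝ) (hH : IsFlowSol n f φ (Ico 0 T) H) :
    ∀ t ∈ Ico (0 : ℝ) T,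
      sphInt n (fun u => Real.log (radialFn n (H t) u))
        = sphInt n (fun u => Real.log (radialFn n (H 0) u)) := by
  intro t ht
  refine const_of_upper_barrier hH.continuousOn_integral (fun t ht => ⟨_,
    hH.hasDerivAt_barrier hn hf_smooth hf_pos hφ_smooth hφ_pos ht, by simp, ?_⟩) ht
  filter_upwards [isOpen_Ioo.mem_nhds ht] with s hs
  exact hH.integral_sub_le hn (Ioo_subset_Ico_self hs) (Ioo_subset_Ico_self ht)
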